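/- Let Y be a nonnegative random variable with finite nonzero mean μ = E[Y], and suppose there exists a random variable Y^s defined on the same probability space having the Y-size bias distribution and satisfying Y^s ≤ Y + c almost surely for some constant c > 0. Then for all t > 0, P(Y − μ ≥ t) ≤ exp(−t²/(2cμ + 2ct/3)). -/

import Mathlib

open MeasureTheory

/-- `Ys` has the `Y`-size bias distribution (with respect to the probability measure `P`):
`E[Y f(Y)] = E[Y] ⬝ E[f(Ys)]` for all bounded measurable `f`. -/
def HasSizeBiasedDistribution {Ω : Type*} [MeasurableSpace Ω] (P : Measure Ω)
    (Y Ys : Ω → ℝ) : Prop :=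
  ∀ f : ℝ → ℝ, Measurable f → (∃ C : ℝ, ∀ x, |f x| ≤ C) →
    ∫ ω, Y ω * f (Y ω) ∂P = (∫ ω, Y ω ∂P) * ∫ ω, f (Ys ω) ∂P

/-! Testing the size bias identity on the indicator of `[x, ∞)` gives, for `F x = P(Y ≥ x)`, the
recursion `x F(x) ≤ E[Y; Y ≥ x] = μ P(Yˢ ≥ x) ≤ μ F(x - c)`: going up by one step of length `c`
multiplies the tail by at most `μ / x`. Iterating this down to the mean, and comparing the resulting
sum of logarithms with the integral of `log (x / μ)`, yields for `x ≥ μ` the Bennett bound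
`F(x) ≤ exp (-(μ / c) h(x / μ))` with `h y = y log y + 1 - y`, which is `InformationTheory.klFun`.
The Bernstein form follows from `3 (y - 1)² ≤ (2 y + 4) h(y)`. -/

open InformationTheory Real Set

lemma klFun_sub_klFun_le {x y : ℝ} (hx : 0 < x) (hy : 0 ≤ y) :
    klFun x - klFun y ≤ (x - y) * log x := by
  -- The gap is the Bregman divergence of `klFun`, that is `x * klFun (y / x)`.
  have bregman : x * klFun (y / x) = (x - y) * log x - (klFun x - klFun y) := by
    rcases hy.eq_or_lt with rfl | hy
    · simp only [klFun_apply, zero_div, zero_mul]; ring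
    · simp only [klFun_apply, log_div hy.ne' hx.ne']; field_simp; ring
  have gap_nonneg : 0 ≤ x * klFun (y / x) := mul_nonneg hx.le (klFun_nonneg (by positivity))
  linarith

lemma three_mul_sub_one_sq_le_mul_klFun {x : ℝ} (hx : 0 ≤ x) :
    3 * (x - 1) ^ 2 ≤ (2 * x + 4) * klFun x := by
  let φ : ℝ → ℝ := fun y ↦ (2 * y + 4) * klFun y - 3 * (y - 1) ^ 2
  let φ' : ℝ → ℝ := fun y ↦ 4 * ((y + 1) * log y - 2 * (y - 1))
  let φ'' : ℝ → ℝ := fun y ↦ 4 * (log y - (1 - y⁻¹))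
  have hφ {y : ℝ} (hy : 0 < y) : HasDerivAt φ (φ' y) y := by
    have h := ((((hasDerivAt_id y).const_mul 2).add_const 4).mul (hasDerivAt_klFun hy.ne')).sub
      ((((hasDerivAt_id y).sub_const 1).pow 2).const_mul 3)
    refine h.congr_deriv ?_
    simp only [φ', klFun_apply, id_eq, Nat.cast_ofNat]
    ring
  have hφ' {y : ℝ} (hy : 0 < y) : HasDerivAt φ' (φ'' y) y := by
    have h := ((((hasDerivAt_id y).add_const 1).mul (hasDerivAt_log hy.ne')).sub
      (((hasDerivAt_id y).sub_const 1).const_mul 2)).const_mul 4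
    refine h.congr_deriv ?_
    simp only [φ'', id_eq]
    field_simp
    ring
  have φ_convex : ConvexOn ℝ (Ici 0) φ := by
    refine convexOn_of_hasDerivWithinAt2_nonneg (f' := φ') (f'' := φ'') (convex_Ici 0)
      (by fun_prop) ?_ ?_ ?_ <;> rw [interior_Ici] <;> intro y hy
    · exact (hφ hy).hasDerivWithinAt
    · exact (hφ' hy).hasDerivWithinAt
    · exact mul_nonneg zero_le_four (sub_nonneg.2 (one_sub_inv_le_log_of_pos hy))
  have φ_min : IsMinOn φ (Ici 0) 1 := by
    refine φ_convex.isMinOn_of_rightDeriv_eq_zero (by simp) ?_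
    rw [(hφ one_pos).hasDerivWithinAt.derivWithin (uniqueDiffWithinAt_Ioi 1)]
    simp [φ']
  have φ_nonneg : φ 1 ≤ φ x := φ_min hx
  simp only [φ, klFun_one] at φ_nonneg
  linarith

lemma sq_div_le_mul_klFun {m t : ℝ} (hm : 0 < m) (ht : 0 ≤ m + t) :
    t ^ 2 / (2 * m + 2 * t / 3) ≤ m * klFun ((m + t) / m) := by
  have h := three_mul_sub_one_sq_le_mul_klFun (div_nonneg ht hm.le)
  rw [div_le_iff₀ (by linarith)]
  calc t ^ 2 = m ^ 2 / 3 * (3 * ((m + t) / m - 1) ^ 2) := by field_simp; ring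
    _ ≤ m ^ 2 / 3 * ((2 * ((m + t) / m) + 4) * klFun ((m + t) / m)) := by gcongr
    _ = m * klFun ((m + t) / m) * (2 * m + 2 * t / 3) := by field_simp; ring

lemma exp_neg_klFun_div_le_mul_exp {δ x y : ℝ} (hδ : 0 < δ) (hx : 1 ≤ x) (hy : 0 ≤ y)
    (hxy : x - y ≤ δ) : exp (-(klFun y / δ)) ≤ x * exp (-(klFun x / δ)) := by
  have hx₀ : 0 < x := one_pos.trans_le hx
  have increment : klFun x / δ - klFun y / δ ≤ log x := by
    rw [← sub_div, div_le_iff₀' hδ]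
    exact (klFun_sub_klFun_le hx₀ hy).trans (mul_le_mul_of_nonneg_right hxy (log_nonneg hx))
  calc exp (-(klFun y / δ)) ≤ exp (log x + -(klFun x / δ)) := by
        rw [exp_le_exp]
        linarith
    _ = x * exp (-(klFun x / δ)) := by rw [exp_add, exp_log hx₀]

theorem le_exp_neg_klFun_div_of_mul_le_sub {G : ℝ → ℝ} {δ : ℝ} (hδ : 0 < δ)
    (hG_one : ∀ y ≤ 1, G y ≤ 1) (hG : ∀ y, 1 ≤ y → y * G y ≤ G (y - δ)) {y : ℝ} (hy : 1 ≤ y) :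
    G y ≤ exp (-(klFun y / δ)) := by
  -- Cutting off at `1` absorbs the last, incomplete step of the recursion.
  have truncated (n : ℕ) : ∀ z ≤ 1 + n * δ, G z ≤ exp (-(klFun (max z 1) / δ)) := by
    have below {z : ℝ} (hz : z ≤ 1) : G z ≤ exp (-(klFun (max z 1) / δ)) := by
      simpa [max_eq_right hz, klFun_one] using hG_one z hz
    induction n with
    | zero => exact fun z hz ↦ below (by simpa using hz)
    | succ n ih =>
      intro z hz
      rcases le_total z 1 with hz₁ | hz₁
      · exact below hz₁
      have step : z * G z ≤ z * exp (-(klFun z / δ)) :=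
        calc z * G z ≤ G (z - δ) := hG z hz₁
          _ ≤ exp (-(klFun (max (z - δ) 1) / δ)) := ih _ (by push_cast at hz; linarith)
          _ ≤ z * exp (-(klFun z / δ)) :=
            exp_neg_klFun_div_le_mul_exp hδ hz₁ (by positivity)
              (by linarith [le_max_left (z - δ) 1])
      simpa only [max_eq_left hz₁] using le_of_mul_le_mul_left step (one_pos.trans_le hz₁)
  obtain ⟨n, hn⟩ := exists_nat_ge ((y - 1) / δ)
  rw [div_le_iff₀ hδ] at hn
  simpa only [max_eq_left hy] using truncated n y (by linarith)

section Tail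

variable {Ω : Type*} [MeasurableSpace Ω] {P : Measure Ω} {Y Ys : Ω → ℝ}

lemma mul_measureReal_ge_le_setIntegral [IsFiniteMeasure P] (hY : Integrable Y P) (x : ℝ) :
    x * P.real {ω | x ≤ Y ω} ≤ ∫ ω in {ω | x ≤ Y ω}, Y ω ∂P := by
  have hs : NullMeasurableSet {ω | x ≤ Y ω} P :=
    nullMeasurableSet_le aemeasurable_const hY.aemeasurable
  calc x * P.real {ω | x ≤ Y ω} = ∫ _ in {ω | x ≤ Y ω}, x ∂P := by
        rw [setIntegral_const, smul_eq_mul, mul_comm]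
    _ ≤ ∫ ω in {ω | x ≤ Y ω}, Y ω ∂P :=
        integral_mono_ae (integrable_const x) hY.integrableOn (ae_restrict_mem₀ hs)

namespace HasSizeBiasedDistribution

lemma setIntegral_preimage (h : HasSizeBiasedDistribution P Y Ys) (hY : AEMeasurable Y P)
    {s : Set ℝ} (hs : MeasurableSet s) :
    ∫ ω in Y ⁻¹' s, Y ω ∂P = (∫ ω, Y ω ∂P) * ∫ ω, (Ys ⁻¹' s).indicator 1 ω ∂P := by
  have hbdd (x : ℝ) : |s.indicator 1 x| ≤ (1 : ℝ) := by
    by_cases hx : x ∈ s <;> simp [hx]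
  calc ∫ ω in Y ⁻¹' s, Y ω ∂P = ∫ ω, Y ω * s.indicator 1 (Y ω) ∂P := by
        rw [← integral_indicator₀ (hY.nullMeasurableSet_preimage hs)]
        congr with ω
        by_cases hω : Y ω ∈ s <;> simp [hω]
    _ = (∫ ω, Y ω ∂P) * ∫ ω, (Ys ⁻¹' s).indicator 1 ω ∂P :=
        h _ (measurable_one.indicator hs) ⟨1, hbdd⟩

lemma mul_measureReal_ge_le_integral_mul [IsFiniteMeasure P] (h : HasSizeBiasedDistribution P Y Ys)
    (hY : Integrable Y P) (hmean : 0 ≤ ∫ ω, Y ω ∂P) {c : ℝ} (hle : ∀ᵐ ω ∂P, Ys ω ≤ Y ω + c)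
    (x : ℝ) :
    x * P.real {ω | x ≤ Y ω} ≤ (∫ ω, Y ω ∂P) * P.real {ω | x - c ≤ Y ω} := by
  have hs : NullMeasurableSet {ω | x - c ≤ Y ω} P :=
    nullMeasurableSet_le aemeasurable_const hY.aemeasurable
  -- `Ys` is not known to be measurable, so its integral is not rewritten as a probability.
  have shift : ∫ ω, (Ys ⁻¹' Ici x).indicator 1 ω ∂P ≤ P.real {ω | x - c ≤ Y ω} :=
    calc ∫ ω, (Ys ⁻¹' Ici x).indicator 1 ω ∂P
        ≤ ∫ ω, {ω | x - c ≤ Y ω}.indicator 1 ω ∂P := by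
          refine integral_mono_of_nonneg (ae_of_all _ (indicator_nonneg fun _ _ ↦ zero_le_one))
            ((integrable_const 1).indicator₀ hs) ?_
          filter_upwards [hle] with ω hω
          refine indicator_apply_le' (fun hx : x ≤ Ys ω ↦ ?_)
            fun _ ↦ indicator_nonneg (fun _ _ ↦ zero_le_one) ω
          have hω_mem : ω ∈ {ω | x - c ≤ Y ω} := sub_le_iff_le_add.2 (hx.trans hω)
          rw [indicator_of_mem hω_mem]
      _ = P.real {ω | x - c ≤ Y ω} := by
          rw [integral_indicator₀ hs]
          exact setIntegral_one_eq_measureReal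
  calc x * P.real {ω | x ≤ Y ω} ≤ ∫ ω in Y ⁻¹' Ici x, Y ω ∂P :=
        mul_measureReal_ge_le_setIntegral hY x
    _ = (∫ ω, Y ω ∂P) * ∫ ω, (Ys ⁻¹' Ici x).indicator 1 ω ∂P :=
        h.setIntegral_preimage hY.aemeasurable measurableSet_Ici
    _ ≤ (∫ ω, Y ω ∂P) * P.real {ω | x - c ≤ Y ω} := mul_le_mul_of_nonneg_left shift hmean

theorem measureReal_ge_le_exp_neg_klFun [IsProbabilityMeasure P]
    (h : HasSizeBiasedDistribution P Y Ys) (hY : Integrable Y P) {m c x : ℝ}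
    (hm : m = ∫ ω, Y ω ∂P) (hm_pos : 0 < m) (hc : 0 < c) (hle : ∀ᵐ ω ∂P, Ys ω ≤ Y ω + c)
    (hx : m ≤ x) :
    P.real {ω | x ≤ Y ω} ≤ exp (-(m * klFun (x / m) / c)) := by
  let G : ℝ → ℝ := fun y ↦ P.real {ω | m * y ≤ Y ω}
  have recursion (y : ℝ) : y * G y ≤ G (y - c / m) := by
    refine le_of_mul_le_mul_left ?_ hm_pos
    have := h.mul_measureReal_ge_le_integral_mul hY (hm ▸ hm_pos.le) hle (m * y)
    rw [← hm] at this
    simpa only [G, mul_sub, mul_div_cancel₀ c hm_pos.ne', mul_assoc] using this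
  have bennett : G (x / m) ≤ exp (-(klFun (x / m) / (c / m))) :=
    le_exp_neg_klFun_div_of_mul_le_sub (div_pos hc hm_pos) (fun _ _ ↦ measureReal_le_one)
      (fun y _ ↦ recursion y) ((one_le_div hm_pos).2 hx)
  have exponent : klFun (x / m) / (c / m) = m * klFun (x / m) / c := by
    rw [div_div_eq_mul_div, mul_comm]
  simpa only [G, mul_div_cancel₀ x hm_pos.ne', exponent] using bennett

end HasSizeBiasedDistribution

end Tail

/-- Bernstein-type right tail bound from a size bias coupling bounded above. -/
theorem bernstein_tail_of_upper_bounded_size_bias_coupling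
    {Ω : Type*} [MeasurableSpace Ω] (P : Measure Ω) [IsProbabilityMeasure P]
    (Y Ys : Ω → ℝ) (hYnonneg : ∀ᵐ ω ∂P, 0 ≤ Y ω) (hYint : Integrable Y P)
    (μ : ℝ) (hμ : μ = ∫ ω, Y ω ∂P) (hμne : μ ≠ 0)
    (c : ℝ) (hc : 0 < c)
    (hsb : HasSizeBiasedDistribution P Y Ys)
    (hbdd : ∀ᵐ ω ∂P, Ys ω ≤ Y ω + c) :
    ∀ t : ℝ, 0 < t →
      (P {ω | t ≤ Y ω - μ}).toReal ≤ Real.exp (-t ^ 2 / (2 * c * μ + 2 * c * t / 3)) := by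
  intro t ht
  have hμ_pos : 0 < μ := (hμ ▸ integral_nonneg_of_ae hYnonneg : 0 ≤ μ).lt_of_ne' hμne
  calc (P {ω | t ≤ Y ω - μ}).toReal = P.real {ω | μ + t ≤ Y ω} := by
        simp only [le_sub_iff_add_le', Measure.real]
    _ ≤ exp (-(μ * klFun ((μ + t) / μ) / c)) :=
        hsb.measureReal_ge_le_exp_neg_klFun hYint hμ hμ_pos hc hbdd (by linarith)
    _ ≤ exp (-(t ^ 2 / (2 * μ + 2 * t / 3) / c)) := by
        gcongr
        exact sq_div_le_mul_klFun hμ_pos (by positivity)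
    _ = exp (-t ^ 2 / (2 * c * μ + 2 * c * t / 3)) := by
        rw [div_div, ← neg_div]; ring_nf
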